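/- Let t ≥ m ≥ 1 and N ≥ 1 be integers and let q ∈ ℂ with 0 < |q| < 1. Then (1 - q^N) · q^{-t} Σ_{0 ≤ k_1 ≤ … ≤ k_t ≤ N, k_m ≥ 1} (q^{1+N};q)_{k_t-1} (q^{1-N};q)_{k_t-1} q^{k_t} Π_{i=1}^{t-1} q^{k_i^2} [ k_{i+1} - k_i - i + Σ_{j=1}^{i} (2 k_j + χ(m > j)) choose k_{i+1} - k_i ]_q = (-1)^N q^{-t + N((2t+1)N+1)/2} Σ_{k=-N}^{N-1} (-1)^k q^{-(2t+1)k(k+1)/2 + m k}. (Both sides are finite sums; all exponents of q are integers. The left side is (1-q^N)·U_t^{(m)}(-q^N; q), expressing that U_t^{(m)}(-q^N;q) equals the analogue J_N^{(t,m)}(q) of the colored Jones polynomial.) -/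

import Mathlib

open Finset

/-- The finite q-Pochhammer symbol `(a;q)_n`. -/
noncomputable def qPoch (q a : ℂ) (n : ℕ) : ℂ := ∏ j ∈ Finset.range n, (1 - a * q ^ j)

/-- The Gaussian binomial coefficient `[n choose k]_q`, zero outside `0 ≤ k ≤ n`. -/
noncomputable def qBinom (q : ℂ) (n k : ℤ) : ℂ :=
  if 0 ≤ k ∧ k ≤ n then
    ∏ j ∈ Finset.range k.toNat, (1 - q ^ (n - k + (j : ℤ) + 1)) / (1 - q ^ ((j : ℤ) + 1))
  else 0

/-- The product
`Π_{i=1}^{T-1} q^{k_i²} [k_{i+1} - k_i - i + Σ_{j=1}^{i}(2k_j + χ(M>j)) choose k_{i+1}-k_i]_q`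
of the vector-valued U-function, for tuples of length `t+1`; the paper's `t, m`
are `t+1, m+1`, so `χ(M > j)` (paper `j`) becomes `χ(j < m)` for 0-based `j`. -/
noncomputable def UtProdM (q : ℂ) (t m : ℕ) (K : Fin (t+1) → ℕ) : ℂ :=
  ∏ i : Fin t, (q ^ (K i.castSucc ^ 2) *
    qBinom q ((K i.succ : ℤ) - (K i.castSucc : ℤ) - ((i : ℕ) + 1)
        + ∑ j ∈ Finset.univ.filter (fun j : Fin (t+1) => (j : ℕ) ≤ (i : ℕ)),
            (2 * (K j : ℤ) + if (j : ℕ) < m then 1 else 0))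
      ((K i.succ : ℤ) - (K i.castSucc : ℤ)))


/-- one level of summation -/
noncomputable def opW (q : ℂ) (N m p : ℕ) (W : ℕ → ℤ → ℂ) : ℕ → ℤ → ℂ := fun k s =>
  q ^ (k ^ 2) * ∑ x ∈ Finset.range (N+1), if k ≤ x ∧ (m ≤ p → 1 ≤ x) then
    W x (s + 2 * (x:ℤ) + (if p < m then 1 else 0) - 1) * qBinom q ((x:ℤ) - k + s) ((x:ℤ) - k) else 0

noncomputable def EW (q : ℂ) (N m : ℕ) : ℕ → (ℕ → ℤ → ℂ) → ℂ
  | 0, W => W 0 0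
  | p+1, W => EW q N m p (opW q N m p W)

lemma EW_congr (q : ℂ) (N m : ℕ) (p : ℕ) : ∀ (W W2 : ℕ → ℤ → ℂ),
    (∀ k s, k ≤ N → 0 ≤ s → (m < p → 1 ≤ k) → W k s = W2 k s) → EW q N m p W = EW q N m p W2 := by
  induction p with
  | zero => intro W W2 h; exact h 0 0 (by omega) le_rfl (by omega)
  | succ p ih =>
    intro W W2 h
    simp only [EW]
    apply ih
    intro k s hk hs hp
    simp only [opW]
    congr 1
    apply Finset.sum_congr rfl
    intro x hx
    split_ifs with h1
    · rw [h _ _ (by simp at hx; omega) (by omega) (by omega)]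
    · rw [h _ _ (by simp at hx; omega) (by omega) (by omega)]
    · rfl

lemma EW_sub (q : ℂ) (N m : ℕ) (p : ℕ) : ∀ (W W2 : ℕ → ℤ → ℂ),
    EW q N m p (fun k s => W k s - W2 k s) = EW q N m p W - EW q N m p W2 := by
  induction p with
  | zero => intro W W2; rfl
  | succ p ih =>
    intro W W2
    simp only [EW]
    rw [← ih]
    congr 1
    funext k s
    simp only [opW]
    rw [← mul_sub, ← Finset.sum_sub_distrib]
    congr 1
    apply Finset.sum_congr rfl
    intro x hx
    split_ifs <;> ring

lemma qBinom_zero (q : ℂ) (n : ℤ) (hn : 0 ≤ n) : qBinom q n 0 = 1 := by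
  simp [qBinom, hn]

lemma EW_zero_part (q : ℂ) (N m : ℕ) (h : ℤ → ℂ) (p : ℕ) (hp : p ≤ m) :
    EW q N m p (fun k s => if k = 0 then h s else 0) = h 0 := by
  induction p with
  | zero => simp [EW]
  | succ p ih =>
    rw [EW, ← ih (by omega)]
    apply EW_congr
    intro k s hk hs _
    simp only [opW]
    have hp' : p < m := by omega
    rw [Finset.sum_eq_single 0]
    · by_cases hk0 : k = 0
      · subst hk0
        simp [hp', qBinom_zero q s hs]
      · simp [hk0]
    · intro b _ hb
      simp [hb]
    · simp

noncomputable def Zsum (q : ℂ) (N m t : ℕ) (W : ℕ → ℤ → ℂ) : ℂ :=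
  ∑ k : Fin (t+1) → Fin (N+1),
    if (∀ i : Fin t, k i.castSucc ≤ k i.succ) ∧ (∀ j : Fin (t+1), m ≤ (j:ℕ) → 1 ≤ (k j : ℕ)) then
      W (k (Fin.last t) : ℕ) (∑ j : Fin (t+1), (2 * ((k j : ℕ) : ℤ) + if (j:ℕ) < m then 1 else 0) - ((t:ℤ)+1))
       * UtProdM q t m (fun i => (k i : ℕ)) else 0

lemma UtProdM_snoc (q : ℂ) (t m N : ℕ) (k : Fin (t+1) → Fin (N+1)) (x : Fin (N+1)) :
    UtProdM q (t+1) m (fun i => ((Fin.snoc k x : Fin (t+2) → Fin (N+1)) i : ℕ)) =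
    UtProdM q t m (fun i => (k i : ℕ)) * (q ^ ((k (Fin.last t) : ℕ) ^ 2) *
      qBinom q ((x : ℕ) - ((k (Fin.last t) : ℕ) : ℤ) +
        (∑ j : Fin (t+1), (2 * ((k j : ℕ) : ℤ) + if (j:ℕ) < m then 1 else 0) - ((t:ℤ)+1)))
        (((x : ℕ) : ℤ) - (k (Fin.last t) : ℕ))) := by
  unfold UtProdM
  rw [Fin.prod_univ_castSucc]
  congr 1
  · apply Finset.prod_congr rfl
    intro i _
    rw [Fin.succ_castSucc, Finset.sum_filter, Fin.sum_univ_castSucc, Finset.sum_filter]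
    simp only [Fin.snoc_castSucc, Fin.val_castSucc, Fin.val_last]
    rw [if_neg (by omega), add_zero]
  · rw [Fin.succ_last, Finset.sum_filter, Fin.sum_univ_castSucc]
    simp only [Fin.snoc_castSucc, Fin.snoc_last, Fin.val_castSucc, Fin.val_last]
    rw [if_neg (by omega), add_zero]
    congr 2
    have : ∀ j : Fin (t+1), (j:ℕ) ≤ t := fun j => by omega
    simp only [this, if_true]
    ring

lemma sum_snoc (n N : ℕ) (f : (Fin (n+1) → Fin (N+1)) → ℂ) :
    ∑ k, f k = ∑ k : Fin n → Fin (N+1), ∑ x : Fin (N+1), f (Fin.snoc k x : Fin (n+1) → Fin (N+1)) := by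
  rw [← (Fin.snocEquiv (fun _ : Fin (n+1) => Fin (N+1))).sum_comp, Fintype.sum_prod_type_right]
  rfl

lemma Zsum_eq (q : ℂ) (hq : ∀ n : ℕ, 0 < n → q ^ n ≠ 1) (N m : ℕ) (t : ℕ) : ∀ W, Zsum q N m t W = EW q N m (t+1) W := by
  induction t with
  | zero =>
    intro W
    unfold Zsum
    simp only [EW, opW]
    rw [← (Equiv.funUnique (Fin 1) (Fin (N+1))).symm.sum_comp, Finset.sum_range]
    simp only [UtProdM]
    simp
    apply Finset.sum_congr rfl
    intro x _
    have h1 : qBinom q (x:ℕ) (x:ℕ) = 1 := by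
      unfold qBinom
      rw [if_pos (by omega)]
      apply Finset.prod_eq_one
      intro j _
      have h2 : (1 - q ^ (j+1)) ≠ 0 := fun h => hq (j+1) (by omega) (by linear_combination -h)
      rw [sub_self, zero_add]
      have h3 : q ^ ((j:ℤ)+1) = q ^ (j+1) := by norm_cast
      rw [h3, div_self h2]
    rw [h1, mul_one]
  | succ t ih =>
    intro W
    rw [EW, ← ih]
    unfold Zsum
    rw [sum_snoc]
    apply Finset.sum_congr rfl
    intro k _
    have hC : ∀ x : Fin (N+1), (((∀ i : Fin (t+1), (Fin.snoc k x : Fin (t+2) → Fin (N+1)) i.castSucc ≤ (Fin.snoc k x : Fin (t+2) → Fin (N+1)) i.succ) ∧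
        (∀ j : Fin (t+2), m ≤ (j:ℕ) → 1 ≤ ((Fin.snoc k x : Fin (t+2) → Fin (N+1)) j : ℕ))) ↔
        (((∀ i : Fin t, k i.castSucc ≤ k i.succ) ∧ (∀ j : Fin (t+1), m ≤ (j:ℕ) → 1 ≤ (k j : ℕ))) ∧
         ((k (Fin.last t) : ℕ) ≤ (x:ℕ) ∧ (m ≤ t+1 → 1 ≤ (x:ℕ))))) := by
      intro x
      rw [Fin.forall_fin_succ', Fin.forall_fin_succ' (P := fun j : Fin (t+2) => m ≤ (j:ℕ) → 1 ≤ ((Fin.snoc k x : Fin (t+2) → Fin (N+1)) j : ℕ))]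
      simp only [Fin.succ_castSucc, Fin.succ_last, Fin.snoc_castSucc, Fin.snoc_last, Fin.val_castSucc, Fin.val_last, Fin.le_def]
      tauto
    by_cases hk : ((∀ i : Fin t, k i.castSucc ≤ k i.succ) ∧ (∀ j : Fin (t+1), m ≤ (j:ℕ) → 1 ≤ (k j : ℕ)))
    · rw [if_pos hk]
      simp only [opW]
      rw [Finset.sum_range, Finset.mul_sum, Finset.sum_mul]
      apply Finset.sum_congr rfl
      intro x _
      by_cases hx : ((k (Fin.last t) : ℕ) ≤ (x:ℕ) ∧ (m ≤ t+1 → 1 ≤ (x:ℕ)))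
      · rw [if_pos ((hC x).2 ⟨hk, hx⟩), if_pos hx, UtProdM_snoc, Fin.sum_univ_castSucc]
        simp only [Fin.snoc_castSucc, Fin.snoc_last, Fin.val_castSucc, Fin.val_last]
        have : ∀ a b c d e : ℂ, a = e → a * (b * (c * d)) = c * (e * d) * b := by
          intros; subst_vars; ring
        apply this
        congr 1
        push_cast
        ring
      · rw [if_neg (fun h => hx ((hC x).1 h).2), if_neg hx]; ring
    · rw [if_neg hk]
      apply Finset.sum_eq_zero
      intro x _
      rw [if_neg (fun h => hk ((hC x).1 h).1)]

/-- reciprocal of `(x;x)_n`, zero for negative `n` -/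
noncomputable def RR (x : ℂ) (n : ℤ) : ℂ :=
  if n < 0 then 0 else ∏ j ∈ Finset.range n.toNat, (1 - x ^ (j+1))⁻¹

lemma RR_neg (x : ℂ) (n : ℤ) (h : n < 0) : RR x n = 0 := by simp [RR, h]

lemma RR_zero (x : ℂ) : RR x 0 = 1 := by simp [RR]

lemma RR_rec (x : ℂ) (hx : ∀ n : ℕ, 0 < n → x ^ n ≠ 1) (n : ℤ) :
    RR x n * (1 - x ^ n) = RR x (n - 1) := by
  rcases lt_trichotomy n 0 with h | h | h
  · rw [RR_neg _ _ h, RR_neg _ _ (by omega), zero_mul]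
  · subst h; rw [RR_neg x (0-1) (by omega)]; simp
  · obtain ⟨k, rfl⟩ : ∃ k : ℕ, n = (k:ℤ) + 1 := ⟨(n-1).toNat, by omega⟩
    have e1 : ((k:ℤ)+1).toNat = k + 1 := by omega
    have e2 : ((k:ℤ)+1-1).toNat = k := by omega
    have := hx (k+1) (by omega)
    have h3 : (1 - x ^ (k+1)) ≠ 0 := fun h => this (by linear_combination -h)
    rw [RR, RR, if_neg (by omega), if_neg (by omega), e1, e2, Finset.prod_range_succ]
    have : x ^ ((k:ℤ)+1) = x ^ (k+1) := by norm_cast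
    rw [this, mul_assoc, inv_mul_cancel₀ h3, mul_one]

lemma shift_sum (N : ℕ) (g : ℕ → ℂ) (hg : ∀ n, N < n → g n = 0) (x : ℂ) (j : ℕ) :
    ∑ L ∈ Finset.range (N+1), g L * RR x ((L:ℤ) - j) =
    ∑ i ∈ Finset.range (N+1), g (j + i) * RR x (i:ℤ) := by
  have h1 : ∑ i ∈ Finset.range (N+1), g (j + i) * RR x (i:ℤ) =
      ∑ i ∈ Finset.range (N+1), g (j + i) * RR x (((j + i : ℕ) : ℤ) - j) := by
    apply Finset.sum_congr rfl
    intro i _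
    congr 2
    push_cast; ring
  rw [h1]
  have h2 := Finset.sum_range_add (fun L => g L * RR x ((L:ℤ) - j)) j (N+1)
  have h3 : ∑ L ∈ Finset.range j, g L * RR x ((L:ℤ) - j) = 0 := by
    apply Finset.sum_eq_zero
    intro L hL
    rw [RR_neg _ _ (by simp at hL; omega), mul_zero]
  rw [h3, zero_add] at h2
  rw [← h2]
  apply Finset.sum_subset
  · intro a; simp; omega
  · intro a _ ha
    rw [hg a (by simp at ha; omega), zero_mul]

/-- q-Vandermonde -/
lemma vand (x : ℂ) (hx0 : x ≠ 0) (hx : ∀ n : ℕ, 0 < n → x ^ n ≠ 1) (A : ℕ) : ∀ (B : ℤ) (L : ℕ), A < L →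
    ∑ i ∈ Finset.range L, x ^ (((A:ℤ) - i) * (B - i)) * RR x i * RR x ((A:ℤ) - i) * RR x (B - i)
      = RR x A * RR x B := by
  induction A with
  | zero =>
    intro B L hL
    rw [Finset.sum_eq_single 0]
    · simp [RR_zero]
    · intro b _ hb
      rw [RR_neg x ((0:ℕ) - (b:ℤ)) (by omega)]; ring
    · intro h; simp at h; omega
  | succ A ih =>
    intro B L hL
    have hA : (1 - x ^ (A+1)) ≠ 0 := fun h => hx (A+1) (by omega) (by linear_combination -h)
    have hR : RR x ((A+1:ℕ):ℤ) * (1 - x ^ (A+1)) = RR x A := by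
      have := RR_rec x hx ((A+1:ℕ):ℤ)
      rw [zpow_natCast] at this
      rw [this]; congr 1; push_cast; ring
    apply mul_right_cancel₀ hA
    rw [mul_right_comm, hR, ← ih B L (by omega), Finset.sum_mul]
    obtain ⟨M, rfl⟩ : ∃ M, L = M + 1 := ⟨L - 1, by omega⟩
    have hsplit : ∀ i ∈ Finset.range (M+1),
        x ^ ((((A+1:ℕ):ℤ) - i) * (B - i)) * RR x i * RR x (((A+1:ℕ):ℤ) - i) * RR x (B - i) * (1 - x ^ (A+1))
        = x ^ (((A:ℤ) - i) * (B - i)) * x ^ (B - i) * RR x i * RR x ((A:ℤ) - i) * RR x (B - i)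
        + x ^ ((((A:ℤ)+1 - i) * (B - i + 1))) * RR x ((i:ℤ) - 1) * RR x ((A:ℤ) + 1 - i) * RR x (B - i) := by
      intro i _
      have e1 := RR_rec x hx ((A:ℤ) + 1 - i)
      have e2 := RR_rec x hx (i:ℤ)
      rw [show (A:ℤ) + 1 - i - 1 = (A:ℤ) - i by ring] at e1
      rw [← e1, ← e2, ← zpow_add₀ hx0]
      have e3 : x ^ (A+1) = x ^ ((A:ℤ)+1-i) * x ^ (i:ℤ) := by
        rw [← zpow_add₀ hx0, ← zpow_natCast]; congr 1; push_cast; ring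
      rw [e3]
      rw [show ((A:ℤ) - i) * (B - i) + (B - i) = ((A:ℤ) + 1 - i) * (B - i) by ring]
      rw [show ((A:ℤ) + 1 - i) * (B - i + 1) = ((A:ℤ) + 1 - i) * (B - i) + ((A:ℤ)+1-i) by ring, zpow_add₀ hx0]
      push_cast
      ring
    rw [Finset.sum_congr rfl hsplit, Finset.sum_add_distrib]
    rw [Finset.sum_range_succ' (fun i : ℕ => x ^ ((((A:ℤ)+1 - i) * (B - i + 1))) * RR x ((i:ℤ) - 1) * RR x ((A:ℤ) + 1 - i) * RR x (B - i))]
    rw [RR_neg x (((0:ℕ):ℤ) - 1) (by omega)]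
    rw [Finset.sum_range_succ _ M, RR_neg x ((A:ℤ) - (M:ℕ)) (by omega)]
    rw [Finset.sum_range_succ _ M, RR_neg x ((A:ℤ) - (M:ℕ)) (by omega)]
    simp only [mul_zero, zero_mul, add_zero]
    rw [← Finset.sum_add_distrib]
    apply Finset.sum_congr rfl
    intro i _
    have e1 := RR_rec x hx (B - i)
    push_cast
    rw [show (A:ℤ) + 1 - (i+1) = (A:ℤ) - i by ring, show (i:ℤ) + 1 - 1 = i by ring,
      show B - ((i:ℤ)+1) = B - i - 1 by ring, ← e1, show B - (i:ℤ) - 1 + 1 = B - i by ring]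
    ring

lemma vand2 (x : ℂ) (hx0 : x ≠ 0) (hx : ∀ n : ℕ, 0 < n → x ^ n ≠ 1) (A B : ℤ) (L : ℕ) (h : A < L) :
    ∑ i ∈ Finset.range L, x ^ ((A - i) * (B - i)) * RR x i * RR x (A - i) * RR x (B - i)
      = RR x A * RR x B := by
  rcases lt_or_ge A 0 with hA | hA
  · rw [RR_neg x A hA, zero_mul]
    apply Finset.sum_eq_zero
    intro i _
    rw [RR_neg x (A - i) (by omega)]; ring
  · obtain ⟨a, rfl⟩ := Int.eq_ofNat_of_zero_le hA
    exact vand x hx0 hx a B L (by exact_mod_cast h)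

/-- Bailey step for kernels, `r ≥ 0` -/
lemma bailey (x : ℂ) (hx0 : x ≠ 0) (hx : ∀ n : ℕ, 0 < n → x ^ n ≠ 1) (N l r : ℕ) (e : ℤ) (hl : l ≤ N) :
    ∑ j ∈ Finset.range (N+1), x ^ ((j:ℤ)^2 + e * j) * (RR x ((j:ℤ) - r) * RR x ((j:ℤ) + r + e)) * RR x ((l:ℤ) - j)
      = x ^ ((r:ℤ)^2 + e * r) * (RR x ((l:ℤ) - r) * RR x ((l:ℤ) + r + e)) := by
  have h0 : ∑ j ∈ Finset.range (N+1), x ^ ((j:ℤ)^2 + e * j) * (RR x ((j:ℤ) - r) * RR x ((j:ℤ) + r + e)) * RR x ((l:ℤ) - j)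
    = ∑ j ∈ Finset.range (l+1), x ^ ((j:ℤ)^2 + e * j) * (RR x ((j:ℤ) - r) * RR x ((j:ℤ) + r + e)) * RR x ((l:ℤ) - j) := by
    symm
    apply Finset.sum_subset
    · intro a; simp; omega
    · intro a _ ha
      rw [RR_neg x ((l:ℤ) - a) (by simp at ha; omega), mul_zero]
  rw [h0, ← Finset.sum_range_reflect, ← vand2 x hx0 hx ((l:ℤ)-r) ((l:ℤ)+r+e) (l+1) (by omega), Finset.mul_sum]
  apply Finset.sum_congr rfl
  intro i hi
  have : ((l + 1 - 1 - i : ℕ) : ℤ) = (l:ℤ) - i := by simp at hi; omega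
  rw [this]
  rw [show (l:ℤ) - i - r = (l:ℤ) - r - i by ring, show (l:ℤ) - i + r + e = (l:ℤ) + r + e - i by ring,
    show (l:ℤ) - (l - i) = i by ring,
    show ((l:ℤ) - i)^2 + e * (l - i) = ((r:ℤ)^2 + e * r) + ((l:ℤ) - r - i) * ((l:ℤ) + r + e - i) by ring, zpow_add₀ hx0]
  ring

lemma unit_pair (x : ℂ) (hx0 : x ≠ 0) (hx : ∀ n : ℕ, 0 < n → x ^ n ≠ 1) (N l : ℕ) (hl : l ≤ N) :
    ∑ r ∈ Finset.range (N+1), (-1:ℂ)^r * x ^ (r.choose 2) * (1 - x ^ (2*r+1)) * (RR x ((l:ℤ) - r) * RR x ((l:ℤ) + r + 1))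
      = if l = 0 then 1 else 0 := by
  rcases Nat.eq_zero_or_pos l with rfl | h
  · rw [Finset.sum_eq_single 0]
    · have := RR_rec x hx 1
      simp [RR_zero] at this ⊢
      linear_combination this
    · intro b _ hb
      rw [RR_neg x (((0:ℕ):ℤ) - b) (by omega)]; ring
    · intro h; simp at h
  · rw [if_neg (by omega)]
    have hA : (1 - x ^ l) ≠ 0 := fun h' => hx l h (by linear_combination -h')
    apply mul_right_cancel₀ hA
    rw [zero_mul, Finset.sum_mul]
    set H : ℕ → ℂ := fun r => (-1:ℂ)^r * x ^ (r.choose 2) * (1 - x ^ r) * (RR x ((l:ℤ) - r) * RR x ((l:ℤ) + r)) with hH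
    have : ∀ r ∈ Finset.range (N+1), (-1:ℂ)^r * x ^ (r.choose 2) * (1 - x ^ (2*r+1)) * (RR x ((l:ℤ) - r) * RR x ((l:ℤ) + r + 1)) * (1 - x ^ l) = H r - H (r+1) := by
      intro r _
      have e1 := RR_rec x hx ((l:ℤ) - r)
      have e2 := RR_rec x hx ((l:ℤ) + r + 1)
      simp only [hH]
      push_cast
      rw [show (l:ℤ) - (r+1) = l - r - 1 by ring, ← e1, ← add_assoc (l:ℤ)]
      rw [show (l:ℤ) + r + 1 - 1 = l + r by ring] at e2
      rw [← e2, Nat.choose_succ_succ' r 1, Nat.choose_one_right, zpow_sub₀ hx0,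
        show (l:ℤ) + r + 1 = ((l + r + 1 : ℕ):ℤ) by push_cast; ring, zpow_natCast, zpow_natCast, zpow_natCast]
      field_simp
      ring
    rw [Finset.sum_congr rfl this, Finset.sum_range_sub']
    simp only [hH]
    rw [RR_neg x ((l:ℤ) - ((N+1:ℕ):ℤ)) (by push_cast; omega)]
    simp

noncomputable def PP (q : ℂ) (N k : ℕ) : ℂ :=
  if k = 0 then ((1 - q ^ (N:ℤ)) * (1 - q ^ (-(N:ℤ))))⁻¹ else
    qPoch q (q ^ (1 + (N : ℤ))) (k - 1) * qPoch q (q ^ (1 - (N : ℤ))) (k - 1)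

lemma one_sub_zpow_ne (q : ℂ) (hq0 : q ≠ 0) (hq : ∀ n : ℕ, 0 < n → q ^ n ≠ 1) (n : ℤ) (hn : n ≠ 0) :
    1 - q ^ n ≠ 0 := by
  intro h
  rcases lt_or_gt_of_ne hn with h1 | h1
  · obtain ⟨k, rfl⟩ : ∃ k : ℕ, n = -(k:ℤ) := ⟨(-n).toNat, by omega⟩
    rw [zpow_neg, zpow_natCast] at h
    refine hq k (by omega) ?_
    have h2 : (q^k)⁻¹ = 1 := by linear_combination -h
    simpa using h2
  · obtain ⟨k, rfl⟩ : ∃ k : ℕ, n = (k:ℤ) := ⟨n.toNat, by omega⟩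
    rw [zpow_natCast] at h
    exact hq k (by omega) (by linear_combination -h)

lemma PP_succ (q : ℂ) (hq0 : q ≠ 0) (hq : ∀ n : ℕ, 0 < n → q ^ n ≠ 1) (N : ℕ) (hN : 1 ≤ N) (k : ℕ) :
    PP q N (k+1) = PP q N k * ((1 - q ^ ((k:ℤ) + N)) * (1 - q ^ ((k:ℤ) - N))) := by
  rcases Nat.eq_zero_or_pos k with rfl | h
  · have h1 := one_sub_zpow_ne q hq0 hq N (by omega)
    have h2 := one_sub_zpow_ne q hq0 hq (-N) (by omega)
    simp only [PP]
    simp only [qPoch]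
    rw [if_neg (by omega), if_pos trivial]
    simp only [Nat.cast_zero, zero_add, zero_sub]
    rw [inv_mul_cancel₀ (mul_ne_zero h1 h2)]
    simp
  · obtain ⟨j, rfl⟩ : ∃ j, k = j + 1 := ⟨k - 1, by omega⟩
    simp only [PP]
    rw [if_neg (by omega), if_neg (by omega)]
    simp only [qPoch, Nat.add_sub_cancel, Finset.prod_range_succ]
    rw [← zpow_natCast q j, ← zpow_add₀ hq0, ← zpow_add₀ hq0]
    push_cast
    rw [show 1 + (N:ℤ) + j = j + 1 + N by ring, show 1 - (N:ℤ) + j = j + 1 - N by ring]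
    ring

lemma PP_big (q : ℂ) (hq0 : q ≠ 0) (hq : ∀ n : ℕ, 0 < n → q ^ n ≠ 1) (N : ℕ) (hN : 1 ≤ N) (k : ℕ) (hk : N < k) :
    PP q N k = 0 := by
  induction k with
  | zero => omega
  | succ k ih =>
    rw [PP_succ q hq0 hq N hN]
    rcases Nat.lt_or_ge N k with h | h
    · rw [ih h, zero_mul]
    · have : k = N := by omega
      subst this; simp

lemma base_sum (q : ℂ) (hq0 : q ≠ 0) (hq : ∀ n : ℕ, 0 < n → q ^ n ≠ 1) (N : ℕ) (hN : 1 ≤ N) (e : ℕ) :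
    ∀ κ : ℕ, κ + e = N → ∑ i ∈ Finset.range (N+1), PP q N (κ + i) * q ^ i * RR q (i:ℤ)
      = q ^ ((N:ℤ)^2 - (κ:ℤ)^2) * PP q N κ := by
  induction e with
  | zero =>
    intro κ h
    have : κ = N := by omega
    subst this
    rw [Finset.sum_eq_single 0]
    · simp [RR_zero]
    · intro b _ hb
      rw [PP_big q hq0 hq κ hN _ (by omega)]; ring
    · simp
  | succ e ih =>
    intro κ h
    have h1 := one_sub_zpow_ne q hq0 hq ((κ:ℤ) + N) (by omega)
    have h2 := one_sub_zpow_ne q hq0 hq ((κ:ℤ) - N) (by omega)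
    apply mul_right_cancel₀ (mul_ne_zero h1 h2)
    rw [mul_assoc, ← PP_succ q hq0 hq N hN]
    have key := ih (κ+1) (by omega)
    have e2 : q ^ ((N:ℤ)^2 - (κ:ℤ)^2) = q ^ (2*κ+1) * q ^ ((N:ℤ)^2 - ((κ+1:ℕ):ℤ)^2) := by
      rw [← zpow_natCast q (2*κ+1), ← zpow_add₀ hq0]; congr 1; push_cast; ring
    rw [e2, mul_assoc, ← key, Finset.sum_mul, Finset.mul_sum]
    have hsplit : ∀ i ∈ Finset.range (N+1),
        PP q N (κ + i) * q ^ i * RR q (i:ℤ) * ((1 - q ^ ((κ:ℤ) + N)) * (1 - q ^ ((κ:ℤ) - N)))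
        = PP q N (κ + i + 1) * RR q i + PP q N (κ + i) * RR q ((i:ℤ) - 1) * (q ^ (2 * κ + i) - 1) := by
      intro i _
      rw [PP_succ q hq0 hq N hN, ← RR_rec q hq i]
      push_cast
      rw [show (κ:ℤ) + i + N = κ + N + i by ring, show (κ:ℤ) + i - N = κ - N + i by ring,
        zpow_add₀ hq0 _ (i:ℤ), zpow_add₀ hq0 _ (i:ℤ), zpow_add₀ hq0, zpow_sub₀ hq0]
      simp only [zpow_natCast]
      field_simp
      ring
    rw [Finset.sum_congr rfl hsplit, Finset.sum_add_distrib]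
    rw [Finset.sum_range_succ' (fun i : ℕ => PP q N (κ + i) * RR q ((i:ℤ) - 1) * (q ^ (2 * κ + i) - 1))]
    rw [RR_neg q (((0:ℕ):ℤ) - 1) (by omega)]
    rw [Finset.sum_range_succ _ N, Finset.sum_range_succ _ N, PP_big q hq0 hq N hN (κ + N + 1) (by omega),
      PP_big q hq0 hq N hN (κ + 1 + N) (by omega)]
    simp only [zero_mul, mul_zero, add_zero]
    rw [← Finset.sum_add_distrib]
    apply Finset.sum_congr rfl
    intro i _
    push_cast
    rw [show (i:ℤ) + 1 - 1 = i by ring, show κ + (i+1) = κ + i + 1 by ring, show κ + 1 + i = κ + i + 1 by ring]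
    ring

lemma base_sum' (q : ℂ) (hq0 : q ≠ 0) (hq : ∀ n : ℕ, 0 < n → q ^ n ≠ 1) (N : ℕ) (hN : 1 ≤ N) (κ : ℕ) :
    ∑ i ∈ Finset.range (N+1), PP q N (κ + i) * q ^ i * RR q (i:ℤ)
      = q ^ ((N:ℤ)^2 - (κ:ℤ)^2) * PP q N κ := by
  rcases Nat.lt_or_ge N κ with h | h
  · rw [PP_big q hq0 hq N hN _ h, mul_zero]
    apply Finset.sum_eq_zero
    intro i _
    rw [PP_big q hq0 hq N hN _ (by omega)]; ring
  · exact base_sum q hq0 hq N hN (N - κ) κ (by omega)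

lemma base_shift (q : ℂ) (hq0 : q ≠ 0) (hq : ∀ n : ℕ, 0 < n → q ^ n ≠ 1) (N : ℕ) (hN : 1 ≤ N) (κ i : ℕ) :
    ∑ n ∈ Finset.range (N+1), PP q N (κ + n) * q ^ n * RR q ((n:ℤ) - i)
      = q ^ ((N:ℤ)^2 - ((κ:ℤ) + i)^2 + i) * PP q N (κ + i) := by
  rw [shift_sum N (fun n => PP q N (κ + n) * q ^ n) (fun n hn => by
    show _ = _; beta_reduce; rw [PP_big q hq0 hq N hN _ (by omega)]; ring)]
  have := base_sum' q hq0 hq N hN (κ + i)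
  rw [zpow_add₀ hq0, zpow_natCast, mul_right_comm]
  push_cast at this
  rw [← this, Finset.sum_mul]
  apply Finset.sum_congr rfl
  intro j _
  rw [← add_assoc]; ring

lemma qBinom_expand (q : ℂ) (hq0 : q ≠ 0) (hq : ∀ n : ℕ, 0 < n → q ^ n ≠ 1) 
    (hq' : ∀ n : ℕ, 0 < n → q⁻¹ ^ n ≠ 1) (s : ℤ) (hs : 0 ≤ s) (n : ℕ) : ∀ L : ℕ, n < L →
    qBinom q ((n:ℤ) + s) n = ∑ i ∈ Finset.range L, q ^ (s * i) * RR q⁻¹ i * RR q ((n:ℤ) - i) := by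
  induction n with
  | zero =>
    intro L hL
    rw [Finset.sum_eq_single 0]
    · simp [RR_zero, qBinom_zero q s hs]
    · intro b _ hb
      rw [RR_neg q (((0:ℕ):ℤ) - b) (by omega)]; ring
    · intro h; simp at h; omega
  | succ n ih =>
    intro L hL
    have hn : 1 - q ^ (n+1) ≠ 0 := fun h => hq (n+1) (by omega) (by linear_combination -h)
    have hb : qBinom q (((n+1:ℕ):ℤ) + s) ((n+1:ℕ):ℤ) * (1 - q ^ (n+1)) = (1 - q ^ (s + n + 1)) * qBinom q ((n:ℤ) + s) n := by
      simp only [qBinom]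
      rw [if_pos (by omega), if_pos (by omega)]
      simp only [Int.toNat_natCast, Finset.prod_range_succ, add_sub_cancel_left]
      have : q ^ ((n:ℤ)+1) = q ^ (n+1) := by norm_cast
      rw [this]
      field_simp
    apply mul_right_cancel₀ hn
    rw [hb, ih L (by omega), Finset.sum_mul]
    obtain ⟨M, rfl⟩ : ∃ M, L = M + 1 := ⟨L - 1, by omega⟩
    have hsplit : ∀ i ∈ Finset.range (M+1),
        q ^ (s * i) * RR q⁻¹ i * RR q (((n+1:ℕ):ℤ) - i) * (1 - q ^ (n+1))
        = q ^ (s * i) * RR q⁻¹ i * RR q ((n:ℤ) - i)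
          - q ^ (n+1) * (q ^ (s * i) * RR q⁻¹ ((i:ℤ) - 1) * RR q ((n:ℤ) + 1 - i)) := by
      intro i _
      have e1 := RR_rec q hq ((n:ℤ) + 1 - i)
      have e2 := RR_rec q⁻¹ hq' (i:ℤ)
      rw [show (n:ℤ) + 1 - i - 1 = n - i by ring] at e1
      rw [← e1, ← e2, zpow_sub₀ hq0, show (n:ℤ) + 1 = ((n+1:ℕ):ℤ) by push_cast; ring, zpow_natCast, zpow_natCast,
        zpow_natCast, inv_pow]
      field_simp
      ring
    rw [Finset.sum_congr rfl hsplit, Finset.sum_sub_distrib, ← Finset.mul_sum]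
    rw [Finset.sum_range_succ' (fun i : ℕ => q ^ (s * i) * RR q⁻¹ ((i:ℤ) - 1) * RR q ((n:ℤ) + 1 - i))]
    rw [RR_neg _ (((0:ℕ):ℤ) - 1) (by omega)]
    rw [Finset.sum_range_succ _ M, RR_neg q ((n:ℤ) - (M:ℕ)) (by omega)]
    simp only [zero_mul, mul_zero, add_zero]
    rw [sub_mul, one_mul, Finset.mul_sum, Finset.mul_sum]
    congr 1
    apply Finset.sum_congr rfl
    intro i _
    push_cast
    rw [show (i:ℤ) + 1 - 1 = i by ring, show (n:ℤ) + 1 - (i + 1) = n - i by ring, mul_add, zpow_add₀ hq0 (s * i),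
      show s + (n:ℤ) + 1 = s + ((n+1:ℕ):ℤ) by push_cast; ring, zpow_add₀ hq0, zpow_natCast]
    ring_nf

noncomputable def Wd (q : ℂ) (N : ℕ) (d : ℕ → ℂ) : ℕ → ℤ → ℂ := fun k s =>
  q ^ k * ∑ l ∈ Finset.range (N+1), PP q N (k + l) * q ^ ((s - 2 * k) * l) * d l

noncomputable def TT (q : ℂ) (N : ℕ) (c : ℤ) (d : ℕ → ℂ) : ℕ → ℂ := fun l =>
  q ^ ((N:ℤ)^2 - (l:ℤ)^2 + l) * ∑ j ∈ Finset.range (N+1), q ^ ((c - 2) * j) * d j * RR q⁻¹ ((l:ℤ) - j)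

lemma step (q : ℂ) (hq0 : q ≠ 0) (hq : ∀ n : ℕ, 0 < n → q ^ n ≠ 1)
    (hq' : ∀ n : ℕ, 0 < n → q⁻¹ ^ n ≠ 1) (N : ℕ) (hN : 1 ≤ N) (c : ℤ) (d : ℕ → ℂ)
    (k : ℕ) (s : ℤ) (hs : 0 ≤ s) :
    q ^ (k ^ 2) * ∑ n ∈ Finset.range (N+1), Wd q N d (k + n) (s + 2 * ((k + n : ℕ) : ℤ) + c - 1) * qBinom q ((n:ℤ) + s) n
     = Wd q N (TT q N c d) k s := by
  have h1 : ∑ n ∈ Finset.range (N+1), Wd q N d (k + n) (s + 2 * ((k + n : ℕ) : ℤ) + c - 1) * qBinom q ((n:ℤ) + s) n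
    = ∑ l ∈ Finset.range (N+1), ∑ i ∈ Finset.range (N+1), q ^ k * q ^ ((s + c - 1) * l) * d l * q ^ (s * i) * RR q⁻¹ i *
       (q ^ ((N:ℤ)^2 - ((k + l : ℕ) + (i:ℤ))^2 + i) * PP q N (k + l + i)) := by
    simp only [← base_shift q hq0 hq N hN, Finset.mul_sum]
    have h2 : ∀ n ∈ Finset.range (N+1), Wd q N d (k + n) (s + 2 * ((k + n : ℕ) : ℤ) + c - 1) * qBinom q ((n:ℤ) + s) n
       = ∑ l ∈ Finset.range (N+1), ∑ i ∈ Finset.range (N+1), q ^ k * q ^ ((s + c - 1) * l) * d l * q ^ (s * i) * RR q⁻¹ i *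
       (PP q N (k + l + n) * q ^ n * RR q ((n:ℤ) - i)) := by
      intro n hn
      rw [qBinom_expand q hq0 hq hq' s hs n (N+1) (by simpa using hn)]
      simp only [Wd]
      rw [Finset.mul_sum (Finset.range (N+1)) _ (q ^ (k+n)), Finset.sum_mul_sum]
      apply Finset.sum_congr rfl
      intro l _
      apply Finset.sum_congr rfl
      intro i _
      rw [show s + 2 * ((k + n : ℕ) : ℤ) + c - 1 - 2 * ((k + n : ℕ) : ℤ) = s + c - 1 by ring, pow_add,
        show k + n + l = k + l + n by ring]
      ring
    rw [Finset.sum_congr rfl h2, Finset.sum_comm]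
    apply Finset.sum_congr rfl
    intro l _
    rw [Finset.sum_comm]
  rw [h1]
  simp only [Wd, TT, Finset.mul_sum]
  conv_rhs => rw [Finset.sum_comm]
  apply Finset.sum_congr rfl
  intro j hj
  have := shift_sum N (fun L => q ^ k * (PP q N (k + L) * q ^ ((s - 2 * k) * (L:ℤ)) * (q ^ ((N:ℤ)^2 - (L:ℤ)^2 + L) * (q ^ ((c-2) * (j:ℤ)) * d j))))
    (fun n hn => by show _ = _; beta_reduce; rw [PP_big q hq0 hq N hN _ (by omega)]; ring) q⁻¹ j
  refine Eq.trans ?_ (Eq.trans this.symm ?_)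
  rotate_left
  · apply Finset.sum_congr rfl
    intro L _
    ring
  · apply Finset.sum_congr rfl
    intro i _
    have e : q ^ (k^2) * (q ^ ((s + c - 1) * (j:ℤ)) * q ^ (s * (i:ℤ)) * q ^ ((N:ℤ)^2 - ((k + j : ℕ) + (i:ℤ))^2 + i))
      = q ^ ((s - 2 * k) * ((j + i : ℕ):ℤ)) * q ^ ((N:ℤ)^2 - ((j + i : ℕ):ℤ)^2 + ((j+i:ℕ):ℤ)) * q ^ ((c-2) * (j:ℤ)) := by
      rw [← zpow_natCast q (k^2)]
      simp only [← zpow_add₀ hq0]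
      congr 1
      push_cast
      ring
    rw [← add_assoc k j i]
    linear_combination (q ^ k * d j * RR q⁻¹ i * PP q N (k + j + i)) * e

lemma opW_Wd (q : ℂ) (hq0 : q ≠ 0) (hq : ∀ n : ℕ, 0 < n → q ^ n ≠ 1)
    (hq' : ∀ n : ℕ, 0 < n → q⁻¹ ^ n ≠ 1) (N : ℕ) (hN : 1 ≤ N) (m p : ℕ) (d : ℕ → ℂ)
    (k : ℕ) (s : ℤ) (hs : 0 ≤ s) :
    opW q N m p (Wd q N d) k s = Wd q N (TT q N (if p < m then 1 else 0) d) k s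
      - if m ≤ p ∧ k = 0 then Wd q N d 0 (s + (if p < m then 1 else 0) - 1) else 0 := by
  rw [← step q hq0 hq hq' N hN _ d k s hs, opW]
  set c : ℤ := if p < m then 1 else 0 with hc
  have hfull : ∑ n ∈ Finset.range (N+1), Wd q N d (k + n) (s + 2 * ((k + n : ℕ) : ℤ) + c - 1) * qBinom q ((n:ℤ) + s) n
      = ∑ x ∈ Finset.range (N+1), if k ≤ x then Wd q N d x (s + 2 * (x:ℤ) + c - 1) * qBinom q ((x:ℤ) - k + s) ((x:ℤ) - k) else 0 := by
    have h2 := Finset.sum_range_add (fun x => if k ≤ x then Wd q N d x (s + 2 * (x:ℤ) + c - 1) * qBinom q ((x:ℤ) - k + s) ((x:ℤ) - k) else 0) k (N+1)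
    have h3 : ∑ x ∈ Finset.range k, (if k ≤ x then Wd q N d x (s + 2 * (x:ℤ) + c - 1) * qBinom q ((x:ℤ) - k + s) ((x:ℤ) - k) else 0) = 0 := by
      apply Finset.sum_eq_zero
      intro x hx
      rw [if_neg (by simp at hx; omega)]
    rw [h3, zero_add] at h2
    have h4 : ∑ n ∈ Finset.range (N+1), Wd q N d (k + n) (s + 2 * ((k + n : ℕ) : ℤ) + c - 1) * qBinom q ((n:ℤ) + s) n
      = ∑ x ∈ Finset.range (N+1), (if k ≤ k + x then Wd q N d (k+x) (s + 2 * ((k+x:ℕ):ℤ) + c - 1) * qBinom q (((k+x:ℕ):ℤ) - k + s) (((k+x:ℕ):ℤ) - k) else 0) := by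
      apply Finset.sum_congr rfl
      intro n _
      rw [if_pos (by omega), show ((k + n : ℕ):ℤ) - k = n by push_cast; ring]
    rw [h4, ← h2]
    symm
    apply Finset.sum_subset
    · intro a; simp; omega
    · intro a _ ha
      have : Wd q N d a (s + 2 * (a:ℤ) + c - 1) = 0 := by
        simp only [Wd]
        rw [Finset.sum_eq_zero, mul_zero]
        intro l _
        rw [PP_big q hq0 hq N hN _ (by simp at ha; omega)]; ring
      rw [this]; simp
  rw [hfull]
  by_cases h : m ≤ p ∧ k = 0
  · obtain ⟨h1, rfl⟩ := h
    rw [if_pos ⟨h1, rfl⟩, Finset.sum_range_succ' , Finset.sum_range_succ']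
    simp [h1, qBinom_zero q s hs]
  · rw [if_neg h, sub_zero]
    congr 1
    apply Finset.sum_congr rfl
    intro x _
    congr 1
    apply propext
    constructor
    · intro h; exact h.1
    · intro h'; refine ⟨h', fun h'' => ?_⟩
      by_contra; apply h; omega

lemma EW_final (q : ℂ) (hq0 : q ≠ 0) (hq : ∀ n : ℕ, 0 < n → q ^ n ≠ 1)
    (hq' : ∀ n : ℕ, 0 < n → q⁻¹ ^ n ≠ 1) (N : ℕ) (hN : 1 ≤ N) (m : ℕ) (b : ℕ) : ∀ (d : ℕ → ℂ),
    EW q N m (m + 1 + b) (Wd q N d) = Wd q N ((TT q N 1)^[m] ((TT q N 0)^[b+1] d)) 0 0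
      - Wd q N ((TT q N 0)^[b] d) 0 (-1) := by
  have low : ∀ p, p ≤ m → ∀ d, EW q N m p (Wd q N d) = Wd q N ((TT q N 1)^[p] d) 0 0 := by
    intro p
    induction p with
    | zero => intro _ d; rfl
    | succ p ih =>
      intro hp d
      rw [EW, Function.iterate_succ_apply, ← ih (by omega)]
      apply EW_congr
      intro k s _ hs _
      rw [opW_Wd q hq0 hq hq' N hN m p d k s hs, if_pos (by omega), if_neg (by omega), sub_zero]
  induction b with
  | zero =>
    intro d
    rw [add_zero, EW]
    have : EW q N m m (opW q N m m (Wd q N d)) = EW q N m m (fun k s => Wd q N (TT q N 0 d) k s -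
        (fun k s => if k = 0 then (fun s => Wd q N d 0 (s - 1)) s else 0) k s) := by
      apply EW_congr
      intro k s _ hs _
      rw [opW_Wd q hq0 hq hq' N hN m m d k s hs]
      simp
    rw [this, EW_sub, EW_zero_part q N m _ m le_rfl, low m le_rfl]
    simp
  | succ b ih =>
    intro d
    rw [← add_assoc, EW, Function.iterate_succ_apply (TT q N 0) (b+1), Function.iterate_succ_apply (TT q N 0) b d, ← ih]
    apply EW_congr
    intro k s _ hs hk
    rw [opW_Wd q hq0 hq hq' N hN m _ d k s hs, if_neg (by omega), if_neg (by have := hk (by omega); omega), sub_zero]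

def tri (k : ℤ) : ℤ := k * (k - 1) / 2

lemma two_tri (k : ℤ) : 2 * tri k = k * (k - 1) := by
  unfold tri
  exact Int.mul_ediv_cancel' (Int.even_mul_pred_self k).two_dvd

lemma tri_choose (r : ℕ) : ((r.choose 2 : ℕ) : ℤ) = tri r := by
  have h := two_tri r
  have h2 : r.choose 2 * 2 = r * (r - 1) := by
    have := Nat.triangle_succ
    rw [Nat.choose_two_right]
    exact Nat.div_mul_cancel (Nat.even_mul_pred_self r).two_dvd
  rcases Nat.eq_zero_or_pos r with rfl | hr
  · simp [tri]
  · have h3 : ((r.choose 2 : ℕ) : ℤ) * 2 = r * (r - 1) := by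
      have := congrArg (Nat.cast : ℕ → ℤ) h2
      push_cast [Nat.cast_sub hr] at this
      exact this
    linarith

lemma TT_kernel (x : ℂ) (hx0 : x ≠ 0) (hx : ∀ n : ℕ, 0 < n → x ^ n ≠ 1) (N : ℕ) (e : ℤ) (C : ℂ) (c : ℕ → ℂ)
    (d : ℕ → ℂ) (hd : ∀ j ≤ N, d j = C * x ^ ((j:ℤ)^2 - j) * ∑ r ∈ Finset.range (N+1), c r * (RR x ((j:ℤ) - r) * RR x ((j:ℤ) + r + e)))
    (l : ℕ) (hl : l ≤ N) :
    TT x⁻¹ N (1 - e) d l = (C * x ^ (-(N:ℤ)^2)) * x ^ ((l:ℤ)^2 - l) * ∑ r ∈ Finset.range (N+1), c r * x ^ ((r:ℤ)^2 + e * r) * (RR x ((l:ℤ) - r) * RR x ((l:ℤ) + r + e)) := by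
  unfold TT
  rw [inv_inv]
  have h1 : ∀ j ∈ Finset.range (N+1), x⁻¹ ^ ((1 - e - 2) * (j:ℤ)) * d j * RR x ((l:ℤ) - j) =
      ∑ r ∈ Finset.range (N+1), C * c r * (x ^ ((j:ℤ)^2 + e * j) * (RR x ((j:ℤ) - r) * RR x ((j:ℤ) + r + e)) * RR x ((l:ℤ) - j)) := by
    intro j hj
    rw [hd j (by simp at hj; omega), Finset.mul_sum, Finset.mul_sum, Finset.sum_mul]
    apply Finset.sum_congr rfl
    intro r _
    rw [show (j:ℤ)^2 + e * j = -((1 - e - 2) * (j:ℤ)) + ((j:ℤ)^2 - j) by ring, zpow_add₀ hx0, inv_zpow']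
    ring
  rw [Finset.sum_congr rfl h1, Finset.sum_comm]
  have h2 : ∀ r ∈ Finset.range (N+1), ∑ j ∈ Finset.range (N+1), C * c r * (x ^ ((j:ℤ)^2 + e * j) * (RR x ((j:ℤ) - r) * RR x ((j:ℤ) + r + e)) * RR x ((l:ℤ) - j))
     = C * (c r * x ^ ((r:ℤ)^2 + e * r) * (RR x ((l:ℤ) - r) * RR x ((l:ℤ) + r + e))) := by
    intro r _
    rw [← Finset.mul_sum, bailey x hx0 hx N l r e hl]
    ring
  rw [Finset.sum_congr rfl h2, ← Finset.mul_sum, inv_zpow',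
    show -((N:ℤ)^2 - (l:ℤ)^2 + l) = -(N:ℤ)^2 + ((l:ℤ)^2 - l) by ring, zpow_add₀ hx0]
  ring

noncomputable def Wc (x : ℂ) (b : ℕ) (r : ℤ) : ℂ := (-1:ℂ) ^ r * x ^ (tri r + b * (r^2 + r))

noncomputable def zc (x : ℂ) (b : ℕ) (r : ℕ) : ℂ :=
  Wc x b r - if r = 0 then 0 else Wc x b ((r:ℤ) - 1) * x ^ (2 * (r:ℤ) - 1)

lemma T0_iter (x : ℂ) (hx0 : x ≠ 0) (hx : ∀ n : ℕ, 0 < n → x ^ n ≠ 1) (N : ℕ) (b : ℕ) :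
    ∀ l ≤ N, (TT x⁻¹ N 0)^[b] (fun l => if l = 0 then 1 else 0) l =
      x ^ (-(b * (N:ℤ)^2)) * x ^ ((l:ℤ)^2 - l) * ∑ r ∈ Finset.range (N+1), Wc x b r * (1 - x ^ (2*r+1)) * (RR x ((l:ℤ) - r) * RR x ((l:ℤ) + r + 1)) := by
  induction b with
  | zero =>
    intro l hl
    have := unit_pair x hx0 hx N l hl
    simp only [Function.iterate_zero, id, Wc]
    simp only [Nat.cast_zero, zero_mul, add_zero, neg_zero, zpow_zero, one_mul, ← tri_choose, zpow_natCast]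
    rw [this]
    split_ifs with h
    · subst h; simp
    · simp
  | succ b ih =>
    intro l hl
    rw [Function.iterate_succ_apply']
    have := TT_kernel x hx0 hx N 1 _ _ _ ih l hl
    rw [sub_self] at this
    rw [this, ← zpow_add₀ hx0]
    congr 1
    · congr 2; push_cast; ring
    · apply Finset.sum_congr rfl
      intro r _
      congr 1
      simp only [Wc]
      rw [show tri r + ((b+1:ℕ):ℤ) * ((r:ℤ)^2 + r) = tri r + b * ((r:ℤ)^2+r) + ((r:ℤ)^2 + 1 * r) by push_cast; ring,
        zpow_add₀ hx0 _ ((r:ℤ)^2 + 1 * r)]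
      ring

lemma T0_iter' (x : ℂ) (hx0 : x ≠ 0) (hx : ∀ n : ℕ, 0 < n → x ^ n ≠ 1) (N : ℕ) (b : ℕ) (l : ℕ) (hl : l ≤ N) :
    (TT x⁻¹ N 0)^[b] (fun l => if l = 0 then 1 else 0) l =
      x ^ (-(b * (N:ℤ)^2)) * x ^ ((l:ℤ)^2 - l) * ∑ r ∈ Finset.range (N+1), zc x b r * (RR x ((l:ℤ) - r) * RR x ((l:ℤ) + r + 0)) := by
  rw [T0_iter x hx0 hx N b l hl]
  congr 1
  have h1 : ∀ r ∈ Finset.range (N+1), Wc x b r * (1 - x ^ (2*r+1)) * (RR x ((l:ℤ) - r) * RR x ((l:ℤ) + r + 1))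
     = Wc x b r * (RR x ((l:ℤ) - r) * RR x ((l:ℤ) + r + 0))
       - (fun r : ℕ => (if r = 0 then 0 else Wc x b ((r:ℤ) - 1) * x ^ (2 * (r:ℤ) - 1)) * (RR x ((l:ℤ) - r) * RR x ((l:ℤ) + r + 0))) (r+1) := by
    intro r _
    have e1 := RR_rec x hx ((l:ℤ) - r)
    have e2 := RR_rec x hx ((l:ℤ) + r + 1)
    rw [show (l:ℤ) + r + 1 - 1 = l + r + 0 by ring] at e2
    simp only [Nat.add_eq_zero_iff, one_ne_zero, and_false, if_false]
    push_cast
    rw [show (l:ℤ) - (r+1) = l - r - 1 by ring, ← e1, ← e2, show (r:ℤ) + 1 - 1 = r by ring,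
      show (l:ℤ) + (r + 1) + 0 = l + r + 1 by ring, show 2 * ((r:ℤ)+1) - 1 = ((2 * r + 1 : ℕ):ℤ) by push_cast; ring,
      zpow_natCast, zpow_sub₀ hx0, show (l:ℤ) + r + 1 = ((l + r + 1 : ℕ):ℤ) by push_cast; ring]
    simp only [zpow_natCast]
    field_simp
    ring
  rw [Finset.sum_congr rfl h1, Finset.sum_sub_distrib]
  have h2 := Finset.sum_range_succ' (fun r : ℕ => (if r = 0 then 0 else Wc x b ((r:ℤ) - 1) * x ^ (2 * (r:ℤ) - 1)) * (RR x ((l:ℤ) - r) * RR x ((l:ℤ) + r + 0))) (N+1)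
  rw [Finset.sum_range_succ, RR_neg x ((l:ℤ) - ((N+1:ℕ):ℤ)) (by push_cast; omega)] at h2
  simp only [if_true, zero_mul, mul_zero, add_zero] at h2
  simp only [add_zero]
  rw [← h2, ← Finset.sum_sub_distrib]
  apply Finset.sum_congr rfl
  intro r _
  rw [zc]; ring

lemma T1_iter (x : ℂ) (hx0 : x ≠ 0) (hx : ∀ n : ℕ, 0 < n → x ^ n ≠ 1) (N : ℕ) (b a : ℕ) :
    ∀ l ≤ N, (TT x⁻¹ N 1)^[a] ((TT x⁻¹ N 0)^[b] (fun l => if l = 0 then 1 else 0)) l =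
      x ^ (-((a + b) * (N:ℤ)^2)) * x ^ ((l:ℤ)^2 - l) * ∑ r ∈ Finset.range (N+1), (zc x b r * x ^ (a * (r:ℤ)^2)) * (RR x ((l:ℤ) - r) * RR x ((l:ℤ) + r + 0)) := by
  induction a with
  | zero =>
    intro l hl
    rw [Function.iterate_zero, id, T0_iter' x hx0 hx N b l hl]
    simp
  | succ a ih =>
    intro l hl
    rw [Function.iterate_succ_apply']
    have := TT_kernel x hx0 hx N 0 _ _ _ ih l hl
    rw [sub_zero] at this
    rw [this, ← zpow_add₀ hx0]
    congr 1
    · congr 2; push_cast; ring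
    · apply Finset.sum_congr rfl
      intro r _
      congr 1
      rw [mul_assoc, ← zpow_add₀ hx0]
      congr 2
      push_cast; ring

noncomputable def pp (x : ℂ) (N l : ℕ) : ℂ := PP x⁻¹ N l * x ^ ((l:ℤ)^2 - l)

lemma inv_cond (x : ℂ) (hx : ∀ n : ℕ, 0 < n → x ^ n ≠ 1) : ∀ n : ℕ, 0 < n → x⁻¹ ^ n ≠ 1 := by
  intro n hn h
  rw [inv_pow, inv_eq_one] at h
  exact hx n hn h

lemma pp_succ (x : ℂ) (hx0 : x ≠ 0) (hx : ∀ n : ℕ, 0 < n → x ^ n ≠ 1) (N : ℕ) (hN : 1 ≤ N) (l : ℕ) :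
    pp x N (l+1) = pp x N l * ((1 - x ^ ((l:ℤ) + N)) * (1 - x ^ ((l:ℤ) - N))) := by
  unfold pp
  rw [PP_succ x⁻¹ (inv_ne_zero hx0) (inv_cond x hx) N hN]
  rw [show (((l+1:ℕ):ℤ))^2 - ((l+1:ℕ):ℤ) = ((l:ℤ)^2 - l) + ((l:ℤ) + N) + (l - N) by push_cast; ring, zpow_add₀ hx0, zpow_add₀ hx0,
    inv_zpow', inv_zpow', zpow_neg, zpow_neg]
  have h1 : x ^ ((l:ℤ) + N) ≠ 0 := zpow_ne_zero _ hx0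
  have h2 : x ^ ((l:ℤ) - N) ≠ 0 := zpow_ne_zero _ hx0
  field_simp
  ring

lemma pp_big (x : ℂ) (hx0 : x ≠ 0) (hx : ∀ n : ℕ, 0 < n → x ^ n ≠ 1) (N : ℕ) (hN : 1 ≤ N) (l : ℕ) (hl : N < l) :
    pp x N l = 0 := by
  rw [pp, PP_big x⁻¹ (inv_ne_zero hx0) (inv_cond x hx) N hN l hl, zero_mul]

noncomputable def V0 (x : ℂ) (N r : ℕ) : ℂ := ∑ l ∈ Finset.range (N+1), pp x N l * (RR x ((l:ℤ) - r) * RR x ((l:ℤ) + r + 0))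
noncomputable def V1 (x : ℂ) (N r : ℕ) : ℂ := ∑ l ∈ Finset.range (N+1), pp x N l * x ^ l * (RR x ((l:ℤ) - r) * RR x ((l:ℤ) + r + 0))

lemma V1_ne (x : ℂ) (hx0 : x ≠ 0) (hx : ∀ n : ℕ, 0 < n → x ^ n ≠ 1) (N : ℕ) (hN : 1 ≤ N) (r : ℕ) (hr : r < N) :
    V1 x N r = 0 := by
  have h1 := one_sub_zpow_ne x hx0 hx ((r:ℤ) + N) (by omega)
  have h2 := one_sub_zpow_ne x hx0 hx ((r:ℤ) - N) (by omega)
  apply mul_right_cancel₀ (mul_ne_zero h1 h2)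
  rw [zero_mul, V1, Finset.sum_mul]
  set H : ℕ → ℂ := fun l => pp x N l * (RR x ((l:ℤ) - r - 1) * RR x ((l:ℤ) + r - 1)) * x ^ r with hH
  have : ∀ l ∈ Finset.range (N+1), pp x N l * x ^ l * (RR x ((l:ℤ) - r) * RR x ((l:ℤ) + r + 0)) * ((1 - x ^ ((r:ℤ) + N)) * (1 - x ^ ((r:ℤ) - N))) = H (l+1) - H l := by
    intro l _
    have e1 := RR_rec x hx ((l:ℤ) - r)
    have e2 := RR_rec x hx ((l:ℤ) + r)
    simp only [hH]
    rw [pp_succ x hx0 hx N hN, ← e1, ← e2]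
    push_cast
    rw [show (l:ℤ) + 1 - r - 1 = l - r by ring, show (l:ℤ) + 1 + r - 1 = l + r by ring, add_zero]
    simp only [zpow_add₀ hx0, zpow_sub₀ hx0, zpow_natCast]
    field_simp
    ring
  rw [Finset.sum_congr rfl this, Finset.sum_range_sub]
  simp only [hH]
  rw [pp_big x hx0 hx N hN _ (by omega), RR_neg x (((0:ℕ):ℤ) - r - 1) (by omega)]
  ring

lemma V0_N (x : ℂ) (N : ℕ) : V0 x N N = pp x N N * RR x (2 * N) := by
  rw [V0, Finset.sum_eq_single N]
  · rw [sub_self, RR_zero, one_mul]; congr 2; ring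
  · intro l hl hne
    rw [RR_neg x ((l:ℤ) - N) (by simp at hl; omega)]; ring
  · simp

lemma V1_N (x : ℂ) (N : ℕ) : V1 x N N = x ^ N * V0 x N N := by
  rw [V0_N, V1, Finset.sum_eq_single N]
  · rw [sub_self, RR_zero, one_mul, show (N:ℤ) + N + 0 = 2 * N by ring]; ring
  · intro l hl hne
    rw [RR_neg x ((l:ℤ) - N) (by simp at hl; omega)]; ring
  · simp

lemma V_rec (x : ℂ) (hx0 : x ≠ 0) (hx : ∀ n : ℕ, 0 < n → x ^ n ≠ 1) (N : ℕ) (r : ℕ) :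
    x ^ r * (V0 x N r - V0 x N (r+1)) = V1 x N r - x ^ (2*r+1) * V1 x N (r+1) := by
  simp only [V0, V1]
  rw [← Finset.sum_sub_distrib, Finset.mul_sum, Finset.mul_sum, ← Finset.sum_sub_distrib]
  apply Finset.sum_congr rfl
  intro l _
  have e1 := RR_rec x hx ((l:ℤ) - r)
  have e2 := RR_rec x hx ((l:ℤ) + r + 1)
  rw [show (l:ℤ) + r + 1 - 1 = l + r + 0 by ring] at e2
  push_cast
  rw [show (l:ℤ) - (r+1) = l - r - 1 by ring, ← e1, ← e2, 
      show (l:ℤ) + (r + 1) + 0 = l + r + 1 by ring]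
  simp only [zpow_add₀ hx0, zpow_sub₀ hx0, zpow_natCast, zpow_one]
  field_simp
  ring

lemma V0_lt (x : ℂ) (hx0 : x ≠ 0) (hx : ∀ n : ℕ, 0 < n → x ^ n ≠ 1) (N : ℕ) (hN : 1 ≤ N) (e : ℕ) :
    ∀ r, r + 1 + e = N → V0 x N r = V0 x N N * (1 - x ^ (2 * N)) := by
  induction e with
  | zero =>
    intro r hr
    have h := V_rec x hx0 hx N r
    obtain rfl : N = r + 1 := by omega
    rw [V1_ne x hx0 hx _ hN r (by omega), V1_N] at h
    have h2 : x ^ r ≠ 0 := pow_ne_zero _ hx0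
    apply mul_left_cancel₀ h2
    linear_combination h
  | succ e ih =>
    intro r hr
    have h := V_rec x hx0 hx N r
    rw [V1_ne x hx0 hx _ hN r (by omega), V1_ne x hx0 hx _ hN (r+1) (by omega)] at h
    rw [← ih (r+1) (by omega)]
    have h2 : x ^ r ≠ 0 := pow_ne_zero _ hx0
    apply mul_left_cancel₀ h2
    linear_combination h

lemma RR_ne (x : ℂ) (hx : ∀ n : ℕ, 0 < n → x ^ n ≠ 1) (n : ℤ) (hn : 0 ≤ n) : RR x n ≠ 0 := by
  rw [RR, if_neg (by omega)]
  apply Finset.prod_ne_zero_iff.2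
  intro j _
  exact inv_ne_zero (fun h => hx (j+1) (by omega) (by linear_combination -h))

lemma tri_succ (k : ℤ) : tri (k+1) = tri k + k := by
  have h1 := two_tri k
  have h2 := two_tri (k+1)
  have : 2 * tri (k+1) = 2 * (tri k + k) := by rw [mul_add, h1, h2]; ring
  omega

lemma pp_val (x : ℂ) (hx0 : x ≠ 0) (hx : ∀ n : ℕ, 0 < n → x ^ n ≠ 1) (N : ℕ) (hN : 1 ≤ N) (k : ℕ) :
    k + 1 ≤ N → pp x N (k+1) * RR x ((N:ℤ) + k) * RR x ((N:ℤ) - 1)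
      = (-1:ℂ)^k * x ^ (tri (k+1) - N * k) * RR x N * RR x ((N:ℤ) - k - 1) := by
  induction k with
  | zero => 
    intro _
    have h1 : pp x N 1 = 1 := by simp [pp, PP, qPoch]
    simp [h1, tri]
  | succ k ih =>
    intro hk
    have h := ih (by omega)
    have e1 := RR_rec x hx ((N:ℤ) + (k+1))
    have e2 := RR_rec x hx ((N:ℤ) - k - 1)
    rw [show (N:ℤ) + (k+1) - 1 = N + k by ring] at e1
    rw [pp_succ x hx0 hx N hN]
    push_cast
    rw [show (N:ℤ) - (k + 1) - 1 = N - k - 1 - 1 by ring, ← e2, tri_succ ((k:ℤ)+1),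
      show tri ((k:ℤ)+1) + (k+1) - N * (k+1) = (tri ((k:ℤ)+1) - N * k) + (k + 1 - N) by ring, zpow_add₀ hx0 _ ((k:ℤ) + 1 - N)]
    rw [← e1] at h
    have e3 : x ^ ((k:ℤ) + 1 - N) * x ^ ((N:ℤ) - k - 1) = 1 := by
      rw [← zpow_add₀ hx0, show (k:ℤ) + 1 - N + (N - k - 1) = 0 by ring, zpow_zero]
    rw [show (k:ℤ) + 1 + N = N + (k + 1) by ring]
    rw [pow_succ]
    linear_combination (1 - x ^ ((k:ℤ) + 1 - N)) * h - (-1:ℂ)^k * x ^ (tri (k+1) - N * k) * RR x N * RR x ((N:ℤ) - k - 1) * e3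

lemma V_val (x : ℂ) (hx0 : x ≠ 0) (hx : ∀ n : ℕ, 0 < n → x ^ n ≠ 1) (N : ℕ) (hN : 1 ≤ N) :
    (1 - x⁻¹ ^ N) * (V0 x N N * (1 - x ^ (2 * N))) = (-1:ℂ)^N * x ^ (- (tri N + N)) := by
  obtain ⟨k, rfl⟩ : ∃ k, N = k + 1 := ⟨N - 1, by omega⟩
  have h := pp_val x hx0 hx (k+1) hN k le_rfl
  have e1 := RR_rec x hx (2 * ((k+1:ℕ):ℤ))
  have e2 := RR_rec x hx ((k+1:ℕ):ℤ)
  have hne := RR_ne x hx ((k+1:ℕ):ℤ) (by omega)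
  rw [V0_N]
  rw [← e2, show ((k+1:ℕ):ℤ) + k = 2 * ((k+1:ℕ):ℤ) - 1 by push_cast; ring, ← e1,
    show ((k+1:ℕ):ℤ) - k - 1 = 0 by push_cast; ring, RR_zero] at h
  have e3 : x ^ (2 * ((k+1:ℕ):ℤ)) = x ^ (2 * (k+1)) := by norm_cast
  rw [e3, zpow_natCast] at h
  have h3 : pp x (k+1) (k+1) * (RR x (2 * ((k+1:ℕ):ℤ)) * (1 - x ^ (2*(k+1)))) * (1 - x ^ (k+1)) = (-1:ℂ)^k * x ^ (tri ((k:ℤ)+1) - ((k+1:ℕ):ℤ) * k) := by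
    apply mul_right_cancel₀ hne
    linear_combination h
  have h4 : x ^ (-(tri ((k+1:ℕ):ℤ) + ((k+1:ℕ):ℤ))) = x ^ (tri ((k:ℤ)+1) - ((k+1:ℕ):ℤ) * k) * (x ^ (k+1))⁻¹ := by
    rw [← zpow_natCast x (k+1), ← zpow_neg, ← zpow_add₀ hx0]
    congr 1
    have := two_tri ((k:ℤ)+1)
    push_cast
    linarith
  rw [h4, inv_pow, pow_succ]
  have h5 : x ^ (k+1) * (x ^ (k+1))⁻¹ = 1 := mul_inv_cancel₀ (pow_ne_zero _ hx0)
  linear_combination (-(x ^ (k+1))⁻¹) * h3 - pp x (k+1) (k+1) * (RR x (2 * ((k+1:ℕ):ℤ)) * (1 - x ^ (2*(k+1)))) * h5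

lemma sum_Icc_sym (u : ℤ → ℂ) (N : ℕ) (hN : 1 ≤ N) :
    ∑ k ∈ Finset.Icc (-(N:ℤ)) ((N:ℤ) - 1), u k =
      ∑ r ∈ Finset.range N, (u r + if r = 0 then 0 else u (-r)) + u (-N) := by
  induction N, hN using Nat.le_induction with
  | base =>
    have : Finset.Icc (-((1:ℕ):ℤ)) (((1:ℕ):ℤ) - 1) = {-1, 0} := by decide
    rw [this]; simp; ring
  | succ n hn ih =>
    have : Finset.Icc (-((n+1:ℕ):ℤ)) (((n+1:ℕ):ℤ) - 1) = insert (-((n+1:ℕ):ℤ)) (insert (n:ℤ) (Finset.Icc (-(n:ℤ)) ((n:ℤ) - 1))) := by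
      ext k; simp only [Finset.mem_Icc, Finset.mem_insert]; omega
    rw [this, Finset.sum_insert, Finset.sum_insert, ih, Finset.sum_range_succ, if_neg (by omega)]
    · ring
    · simp
    · simp only [Finset.mem_Icc, Finset.mem_insert]; omega

noncomputable def uu (x : ℂ) (a b : ℕ) (k : ℤ) : ℂ := (-1:ℂ) ^ k * x ^ (tri k + b * (k^2 + k) + a * k^2)

lemma tri_neg (k : ℤ) : tri (-k) = tri k + k := by
  have h1 := two_tri k
  have h2 := two_tri (-k)
  have : 2 * tri (-k) = 2 * (tri k + k) := by rw [mul_add, h1, h2]; ring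
  omega

lemma zc_uu (x : ℂ) (hx0 : x ≠ 0) (a b r : ℕ) :
    zc x b r * x ^ (a * (r:ℤ)^2) = uu x a b r + if r = 0 then 0 else uu x a b (-r) := by
  unfold zc
  split_ifs with h
  · subst h; simp [Wc, uu]
  · simp only [Wc, uu]
    rw [tri_neg]
    have h1 := tri_succ ((r:ℤ) - 1)
    rw [sub_add_cancel] at h1
    rw [h1, sub_mul, mul_assoc, mul_assoc, mul_assoc, ← zpow_add₀ hx0, ← zpow_add₀ hx0, ← zpow_add₀ hx0]
    rw [sub_eq_add_neg]
    congr 1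
    rw [zpow_sub_one₀ (by norm_num), zpow_neg, ← inv_zpow]
    have : ((-1:ℂ))⁻¹ = -1 := by norm_num
    rw [this, mul_neg_one, neg_mul, neg_neg]
    congr 2
    ring

lemma final_sum (x : ℂ) (hx0 : x ≠ 0) (hx : ∀ n : ℕ, 0 < n → x ^ n ≠ 1) (N : ℕ) (hN : 1 ≤ N) (a b : ℕ) :
    Wd x⁻¹ N ((TT x⁻¹ N 1)^[a] ((TT x⁻¹ N 0)^[b+1] (fun l => if l = 0 then 1 else 0))) 0 0
      - Wd x⁻¹ N ((TT x⁻¹ N 0)^[b] (fun l => if l = 0 then 1 else 0)) 0 (-1)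
    = x ^ (-((a + b + 1) * (N:ℤ)^2)) * (V0 x N N * (1 - x ^ (2 * N))) *
       ∑ k ∈ Finset.Icc (-(N:ℤ)) ((N:ℤ) - 1), uu x a (b+1) k := by
  have h1 : Wd x⁻¹ N ((TT x⁻¹ N 1)^[a] ((TT x⁻¹ N 0)^[b+1] (fun l => if l = 0 then 1 else 0))) 0 0
     = x ^ (-((a + b + 1) * (N:ℤ)^2)) * ∑ r ∈ Finset.range (N+1), (zc x (b+1) r * x ^ (a * (r:ℤ)^2)) * V0 x N r := by
    simp only [Wd, V0, Finset.mul_sum]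
    rw [Finset.sum_comm]
    apply Finset.sum_congr rfl
    intro l hl
    rw [T1_iter x hx0 hx N (b+1) a l (by simp at hl; omega), Finset.mul_sum, Finset.mul_sum, Finset.mul_sum]
    apply Finset.sum_congr rfl
    intro r _
    simp only [pp, zero_add, pow_zero, one_mul, Nat.cast_zero, mul_zero, sub_zero, zero_mul, zpow_zero, mul_one, add_zero]
    push_cast
    rw [show (a:ℤ) + (b + 1) = a + b + 1 by ring]
    ring
  have h2 : Wd x⁻¹ N ((TT x⁻¹ N 0)^[b] (fun l => if l = 0 then 1 else 0)) 0 (-1)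
     = x ^ (-(b * (N:ℤ)^2)) * ∑ r ∈ Finset.range (N+1), zc x b r * V1 x N r := by
    simp only [Wd, V1, Finset.mul_sum]
    rw [Finset.sum_comm]
    apply Finset.sum_congr rfl
    intro l hl
    rw [T0_iter' x hx0 hx N b l (by simp at hl; omega), Finset.mul_sum, Finset.mul_sum, Finset.mul_sum]
    apply Finset.sum_congr rfl
    intro r _
    have : x⁻¹ ^ ((-1 - 2 * ((0:ℕ):ℤ)) * (l:ℤ)) = x ^ l := by
      rw [inv_zpow', ← zpow_natCast]; congr 1; push_cast; ring
    rw [this]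
    simp only [pp, zero_add, pow_zero, one_mul, add_zero]
    ring
  have h3 : ∑ r ∈ Finset.range (N+1), zc x b r * V1 x N r = zc x b N * (x ^ N * V0 x N N) := by
    rw [Finset.sum_range_succ, Finset.sum_eq_zero, zero_add, V1_N]
    intro r hr
    rw [V1_ne x hx0 hx N hN r (by simpa using hr), mul_zero]
  have h4 : ∑ r ∈ Finset.range (N+1), (zc x (b+1) r * x ^ (a * (r:ℤ)^2)) * V0 x N r
     = (∑ r ∈ Finset.range N, (uu x a (b+1) r + if r = 0 then 0 else uu x a (b+1) (-r))) * (V0 x N N * (1 - x ^ (2 * N)))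
       + (uu x a (b+1) N + uu x a (b+1) (-N)) * V0 x N N := by
    rw [Finset.sum_range_succ, zc_uu x hx0, if_neg (by omega), Finset.sum_mul]
    congr 1
    apply Finset.sum_congr rfl
    intro r hr
    rw [zc_uu x hx0, V0_lt x hx0 hx N hN (N - 1 - r) r (by simp at hr; omega)]
  have h5 := zc_uu x hx0 0 b N
  rw [if_neg (by omega)] at h5
  simp only [Nat.cast_zero, zero_mul, zpow_zero, mul_one] at h5
  rw [h1, h2, h3, h4, sum_Icc_sym _ N hN, h5]
  have h6 : x ^ (-(b * (N:ℤ)^2)) * (uu x 0 b N * x ^ N) = x ^ (-((a + b + 1) * (N:ℤ)^2)) * uu x a (b+1) N := by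
    simp only [uu]
    rw [← zpow_natCast x N]
    have : ∀ A B C D E : ℂ, A * B * D = C * E → A * ((-1:ℂ)^(N:ℤ) * B * D) = C * ((-1:ℂ)^(N:ℤ) * E) := by
      intro A B C D E h; linear_combination (-1:ℂ)^(N:ℤ) * h
    apply this
    simp only [← zpow_add₀ hx0]
    congr 1; push_cast; ring
  have h7 : x ^ (-(b * (N:ℤ)^2)) * (uu x 0 b (-N) * x ^ N) = x ^ (-((a + b + 1) * (N:ℤ)^2)) * (uu x a (b+1) (-N) * x ^ (2 * N)) := by
    simp only [uu]
    rw [← zpow_natCast x N, ← zpow_natCast x (2 * N)]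
    have : ∀ A B C D E F : ℂ, A * B * D = C * E * F → A * ((-1:ℂ)^(-(N:ℤ)) * B * D) = C * ((-1:ℂ)^(-(N:ℤ)) * E * F) := by
      intro A B C D E F h; linear_combination (-1:ℂ)^(-(N:ℤ)) * h
    apply this
    simp only [← zpow_add₀ hx0]
    congr 1; push_cast; ring
  linear_combination (-V0 x N N) * h6 + (-V0 x N N) * h7

lemma lhs_eq (q : ℂ) (hq0 : q ≠ 0) (hq : ∀ n : ℕ, 0 < n → q ^ n ≠ 1) (t m N : ℕ) (hmt : m ≤ t) :
      ∑ k ∈ Finset.univ.filter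
          (fun k : Fin (t+1) → Fin (N+1) =>
            (∀ i : Fin t, k i.castSucc ≤ k i.succ) ∧ 1 ≤ (k ⟨m, by omega⟩ : ℕ)),
        qPoch q (q ^ (1 + (N : ℤ))) ((k (Fin.last t) : ℕ) - 1) *
          qPoch q (q ^ (1 - (N : ℤ))) ((k (Fin.last t) : ℕ) - 1) *
          q ^ (k (Fin.last t) : ℕ) *
          UtProdM q t m (fun i => (k i : ℕ)) =
      EW q N m (t+1) (Wd q N (fun l => if l = 0 then 1 else 0)) := by
  have h1 : EW q N m (t+1) (Wd q N (fun l => if l = 0 then 1 else 0)) =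
      EW q N m (t+1) (fun k _ => qPoch q (q ^ (1 + (N : ℤ))) (k - 1) *
          qPoch q (q ^ (1 - (N : ℤ))) (k - 1) * q ^ k) := by
    apply EW_congr
    intro k s _ _ hk
    have hk1 := hk (by omega)
    simp only [Wd]
    rw [Finset.sum_eq_single 0]
    · have : k ≠ 0 := by omega
      simp [PP, this]
      ring
    · intro l _ hl
      simp [hl]
    · intro h
      simp at h
  rw [h1, ← Zsum_eq q hq, Zsum, Finset.sum_filter]
  apply Finset.sum_congr rfl
  intro k _
  apply if_congr _ rfl rfl
  constructor
  · rintro ⟨ha, hb⟩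
    refine ⟨ha, fun j hj => ?_⟩
    have hmono : Monotone k := Fin.monotone_iff_le_succ.mpr ha
    have := hmono (show (⟨m, by omega⟩ : Fin (t+1)) ≤ j from hj)
    exact le_trans hb this
  · rintro ⟨ha, hb⟩
    exact ⟨ha, hb _ le_rfl⟩

/-- `(1-q^N)·U_t^{(m)}(-q^N;q)` equals the defining expression of the
analogue `(1-q^N)·J_N^{(t,m)}(q)` of the colored Jones polynomial; the paper's `t, m`
are `t+1, m+1` here (so `2t+1 = 2t+3`, and `k_M ≥ 1` is the 0-based coordinate `m`). -/
theorem stmt17 (t m N : ℕ) (hmt : m ≤ t) (hN : 1 ≤ N) (q : ℂ)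
    (hq0 : 0 < ‖q‖) (hq1 : ‖q‖ < 1) :
    (1 - q ^ N) * q ^ (-(t : ℤ) - 1) *
      ∑ k ∈ Finset.univ.filter
          (fun k : Fin (t+1) → Fin (N+1) =>
            (∀ i : Fin t, k i.castSucc ≤ k i.succ) ∧ 1 ≤ (k ⟨m, by omega⟩ : ℕ)),
        qPoch q (q ^ (1 + (N : ℤ))) ((k (Fin.last t) : ℕ) - 1) *
          qPoch q (q ^ (1 - (N : ℤ))) ((k (Fin.last t) : ℕ) - 1) *
          q ^ (k (Fin.last t) : ℕ) *
          UtProdM q t m (fun i => (k i : ℕ)) =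
    (-1 : ℂ) ^ N * q ^ (-(t : ℤ) - 1 + (N : ℤ) * ((2 * (t : ℤ) + 3) * N + 1) / 2) *
      ∑ k ∈ Finset.Icc (-(N : ℤ)) ((N : ℤ) - 1),
        (-1 : ℂ) ^ k * q ^ (-(2 * (t : ℤ) + 3) * k * (k + 1) / 2 + ((m : ℤ) + 1) * k) := by
  have hq00 : q ≠ 0 := norm_pos_iff.mp hq0
  have hq : ∀ n : ℕ, 0 < n → q ^ n ≠ 1 := by
    intro n hn h
    have h1 : ‖q ^ n‖ < 1 := by
      rw [norm_pow]
      exact pow_lt_one₀ (norm_nonneg _) hq1 (by omega)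
    rw [h, norm_one] at h1
    exact lt_irrefl _ h1
  rw [lhs_eq q hq00 hq t m N hmt]
  obtain ⟨x, rfl⟩ : ∃ x : ℂ, q = x⁻¹ := ⟨q⁻¹, (inv_inv q).symm⟩
  have hx0 : x ≠ 0 := fun h => hq00 (by rw [h, inv_zero])
  have hx : ∀ n : ℕ, 0 < n → x ^ n ≠ 1 := by
    have := inv_cond _ hq
    simpa only [inv_inv] using this
  obtain ⟨b, rfl⟩ : ∃ b, t = m + b := ⟨t - m, by omega⟩
  rw [show m + b + 1 = m + 1 + b by ring, EW_final x⁻¹ hq00 hq (inv_cond _ hq) N hN m b,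
    final_sum x hx0 hx N hN m b]
  have hV := V_val x hx0 hx N hN
  have hs : ∀ k : ℤ, (-1 : ℂ) ^ k * x⁻¹ ^ (-(2 * ((m + b : ℕ) : ℤ) + 3) * k * (k + 1) / 2 + ((m : ℤ) + 1) * k)
      = uu x m (b+1) k := by
    intro k
    unfold uu
    rw [inv_zpow']
    congr 2
    have h2 := two_tri k
    rw [show -(2 * ((m + b : ℕ) : ℤ) + 3) * k * (k + 1) =
      2 * (-((m + b + 1) * (k^2 + k) + tri k + k)) by
        push_cast
        linear_combination h2]
    rw [Int.mul_ediv_cancel_left _ (by norm_num)]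
    push_cast
    ring
  simp only [hs]
  have he : (N : ℤ) * ((2 * ((m + b : ℕ) : ℤ) + 3) * N + 1) / 2 = (m + b + 1) * (N:ℤ)^2 + (tri N + N) := by
    have h2 := two_tri N
    rw [show (N : ℤ) * ((2 * ((m + b : ℕ) : ℤ) + 3) * N + 1) = 2 * ((m + b + 1) * (N:ℤ)^2 + (tri N + N)) by
      push_cast
      linear_combination -h2]
    rw [Int.mul_ediv_cancel_left _ (by norm_num)]
  rw [he, zpow_add₀ hq00, inv_zpow' x ((m + b + 1) * (N:ℤ)^2 + (tri N + N)), neg_add, zpow_add₀ hx0]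
  linear_combination x⁻¹ ^ (-((m + b : ℕ) : ℤ) - 1) * x ^ (-((m + b + 1) * (N:ℤ)^2)) *
    (∑ k ∈ Finset.Icc (-(N:ℤ)) ((N:ℤ) - 1), uu x m (b+1) k) * hV
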